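/- Fix σ > 0 and v ∈ ℝ. The function t ↦ t − log s(t, v) is differentiable on (0, ∞) and its derivative at every t > 0 equals φ(t; v) = 1 − s(t, v − 1)/s(t, v). Consequently, the derivative of the negative log-likelihood −log( e^{−t} s(t, v) / √(2πσ²) ) with respect to t equals φ(t; v). -/

import Mathlib

open Real Set

/-- The Poisson–Gaussian likelihood series
`s(a, b) = Σ_{n=0}^∞ (aⁿ / n!) · exp(−(b − n)² / (2σ²))`. -/
noncomputable def pgS (σ a b : ℝ) : ℝ :=
  ∑' n : ℕ, a ^ n / (Nat.factorial n) * Real.exp (-(b - n) ^ 2 / (2 * σ ^ 2))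

/-- `φ(u; v) = 1 − s(u, v − 1)/s(u, v)`. -/
noncomputable def pgPhi (σ u v : ℝ) : ℝ :=
  1 - pgS σ u (v - 1) / pgS σ u v

/-!
Differentiating an exponential generating function `∑ cₙ xⁿ / n!` shifts its coefficients to
`cₙ₊₁`. The coefficients of `s(·, v)` are the Gaussian weights `exp (-(v - n)² / (2σ²))`, for which
passing from `n` to `n + 1` is the same as passing from `v` to `v - 1`. Hence
`∂ₜ s(t, v) = s(t, v - 1)`, and `φ` is `1` minus the logarithmic derivative of `s(·, v)`.
-/

theorem hasDerivAt_pow_succ_div_factorial {𝕜 : Type*} [NontriviallyNormedField 𝕜]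
    [CharZero 𝕜] (n : ℕ) (x : 𝕜) :
    HasDerivAt (fun x : 𝕜 ↦ x ^ (n + 1) / ((n + 1).factorial : 𝕜))
      (x ^ n / (n.factorial : 𝕜)) x := by
  refine ((hasDerivAt_pow (n + 1) x).div_const _).congr_deriv ?_
  rw [Nat.factorial_succ, Nat.cast_mul, Nat.add_sub_cancel]
  exact mul_div_mul_left _ _ (Nat.cast_ne_zero.mpr n.succ_ne_zero)

section ExpGenFun

variable {𝕜 E : Type*} [RCLike 𝕜] [NormedAddCommGroup E] [NormedSpace 𝕜 E]

/-- The exponential generating function `∑ₙ (xⁿ / n!) • cₙ` of a sequence `c` of vectors, of which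
`pgS` is an instance; it is `0` at points where the series diverges. -/
noncomputable def expGenFun (c : ℕ → E) (x : 𝕜) : E :=
  ∑' n : ℕ, (x ^ n / (n.factorial : 𝕜)) • c n

theorem norm_pow_div_factorial_smul_le {e : E} {M r : ℝ} {x : 𝕜} (he : ‖e‖ ≤ M) (hx : ‖x‖ ≤ r)
    (n : ℕ) : ‖(x ^ n / (n.factorial : 𝕜)) • e‖ ≤ r ^ n / n.factorial * M := by
  have hr : 0 ≤ r := (norm_nonneg x).trans hx
  rw [norm_smul, norm_div, norm_pow, RCLike.norm_natCast]
  gcongr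

variable [CompleteSpace E] {c : ℕ → E} {M : ℝ}

theorem summable_pow_div_factorial_smul (hc : ∀ n, ‖c n‖ ≤ M) (x : 𝕜) :
    Summable fun n : ℕ ↦ (x ^ n / (n.factorial : 𝕜)) • c n :=
  .of_norm_bounded ((summable_pow_div_factorial ‖x‖).mul_right M)
    fun n ↦ norm_pow_div_factorial_smul_le (hc n) le_rfl n

theorem expGenFun_eq_add_tsum_succ (hc : ∀ n, ‖c n‖ ≤ M) (x : 𝕜) :
    expGenFun c x = c 0 + ∑' n : ℕ, (x ^ (n + 1) / ((n + 1).factorial : 𝕜)) • c (n + 1) := by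
  rw [expGenFun, (summable_pow_div_factorial_smul hc x).tsum_eq_zero_add]
  simp

theorem hasDerivAt_expGenFun (hc : ∀ n, ‖c n‖ ≤ M) (x : 𝕜) :
    HasDerivAt (expGenFun c) (expGenFun (fun n ↦ c (n + 1)) x) x := by
  have hx : x ∈ Metric.ball (0 : 𝕜) (‖x‖ + 1) := by simp
  have hasDerivAt_tail : HasDerivAt
      (fun y : 𝕜 ↦ ∑' n : ℕ, (y ^ (n + 1) / ((n + 1).factorial : 𝕜)) • c (n + 1))
      (expGenFun (fun n ↦ c (n + 1)) x) x :=
    hasDerivAt_tsum_of_isPreconnected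
      (g' := fun n y ↦ (y ^ n / (n.factorial : 𝕜)) • c (n + 1))
      ((summable_pow_div_factorial (‖x‖ + 1)).mul_right M)
      Metric.isOpen_ball (convex_ball 0 _).isPreconnected
      (fun n y _ ↦ (hasDerivAt_pow_succ_div_factorial n y).smul_const (c (n + 1)))
      (fun n y hy ↦ norm_pow_div_factorial_smul_le (hc (n + 1)) (mem_ball_zero_iff.mp hy).le n)
      hx ((summable_nat_add_iff 1).mpr (summable_pow_div_factorial_smul hc x)) hx
  rw [funext (expGenFun_eq_add_tsum_succ hc)]
  exact hasDerivAt_tail.const_add (c 0)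

end ExpGenFun

theorem expGenFun_pos {c : ℕ → ℝ} {M a : ℝ} (hc : ∀ n, ‖c n‖ ≤ M) (hc_nonneg : ∀ n, 0 ≤ c n)
    (hc_zero : 0 < c 0) (ha : 0 ≤ a) : 0 < expGenFun c a :=
  (summable_pow_div_factorial_smul hc a).tsum_pos
    (fun n ↦ smul_nonneg (by positivity) (hc_nonneg n)) 0 (by simpa using hc_zero)

theorem neg_log_exp_neg_mul_div {y C : ℝ} (hy : y ≠ 0) (hC : C ≠ 0) (t : ℝ) :
    -log (exp (-t) * y / C) = t - log y + log C := by
  rw [log_div (mul_ne_zero (exp_ne_zero _) hy) hC, log_mul (exp_ne_zero _) hy, log_exp]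
  ring

section PoissonGaussian

variable (σ b : ℝ)

/-- The unnormalised Gaussian weight `exp (-(b - n)² / (2σ²))` of the count `n` given the
observation `b`, that is, the `n`-th coefficient of `pgS σ · b`. -/
noncomputable def pgWeight (n : ℕ) : ℝ :=
  exp (-(b - n) ^ 2 / (2 * σ ^ 2))

theorem pgWeight_pos (n : ℕ) : 0 < pgWeight σ b n :=
  exp_pos _

theorem norm_pgWeight_le_one (n : ℕ) : ‖pgWeight σ b n‖ ≤ 1 := by
  rw [norm_of_nonneg (pgWeight_pos σ b n).le, pgWeight, exp_le_one_iff]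
  exact div_nonpos_of_nonpos_of_nonneg (neg_nonpos.mpr (sq_nonneg _)) (by positivity)

theorem pgWeight_succ (n : ℕ) : pgWeight σ b (n + 1) = pgWeight σ (b - 1) n := by
  simp only [pgWeight, Nat.cast_add_one, sub_sub, add_comm]

theorem pgS_eq_expGenFun (a : ℝ) : pgS σ a b = expGenFun (pgWeight σ b) a :=
  rfl

variable {a : ℝ}

theorem pgS_pos (ha : 0 ≤ a) : 0 < pgS σ a b :=
  expGenFun_pos (norm_pgWeight_le_one σ b) (fun n ↦ (pgWeight_pos σ b n).le)
    (pgWeight_pos σ b 0) ha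

theorem hasDerivAt_pgS (a : ℝ) : HasDerivAt (fun t ↦ pgS σ t b) (pgS σ a (b - 1)) a := by
  simpa only [pgS_eq_expGenFun, pgWeight_succ] using
    hasDerivAt_expGenFun (norm_pgWeight_le_one σ b) a

theorem hasDerivAt_sub_log_pgS (ha : pgS σ a b ≠ 0) :
    HasDerivAt (fun t ↦ t - log (pgS σ t b)) (pgPhi σ a b) a :=
  (hasDerivAt_id a).sub ((hasDerivAt_pgS σ b a).log ha)

theorem hasDerivAt_neg_log_exp_neg_mul_pgS_div {C : ℝ} (hC : C ≠ 0) (ha : pgS σ a b ≠ 0) :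
    HasDerivAt (fun t ↦ -log (exp (-t) * pgS σ t b / C)) (pgPhi σ a b) a := by
  refine ((hasDerivAt_sub_log_pgS σ b ha).add_const (log C)).congr_of_eventuallyEq ?_
  filter_upwards [(hasDerivAt_pgS σ b a).continuousAt.eventually_ne ha] with t ht
  exact neg_log_exp_neg_mul_div ht hC t

end PoissonGaussian

theorem negLogLikelihood_deriv (σ : ℝ) (hσ : 0 < σ) (v : ℝ) :
    (DifferentiableOn ℝ (fun t => t - Real.log (pgS σ t v)) (Set.Ioi (0 : ℝ)) ∧
      ∀ t : ℝ, 0 < t →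
        HasDerivAt (fun t => t - Real.log (pgS σ t v)) (pgPhi σ t v) t) ∧
    ∀ t : ℝ, 0 < t →
      HasDerivAt
        (fun t => -Real.log (Real.exp (-t) * pgS σ t v / Real.sqrt (2 * π * σ ^ 2)))
        (pgPhi σ t v) t := by
  have pgS_ne_zero (t : ℝ) (ht : 0 < t) : pgS σ t v ≠ 0 := (pgS_pos σ v ht.le).ne'
  have sqrt_ne_zero : √(2 * π * σ ^ 2) ≠ 0 := by positivity
  have hasDerivAt_sub_log (t : ℝ) (ht : 0 < t) :=
    hasDerivAt_sub_log_pgS σ v (pgS_ne_zero t ht)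
  exact ⟨⟨fun t ht ↦ (hasDerivAt_sub_log t ht).differentiableAt.differentiableWithinAt,
    hasDerivAt_sub_log⟩,
    fun t ht ↦ hasDerivAt_neg_log_exp_neg_mul_pgS_div σ v sqrt_ne_zero (pgS_ne_zero t ht)⟩
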